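/- Consider a k-SAT instance and γ ∈ ℝ, with BP messages as in the k-SAT BP update. If the right messages satisfy ρ_{c→v}(L∗) = ρ_{c→v}(L̄∗) = ρ_{c→v}(∗∗) for every pair (v-c), then after one BP iteration — all left messages λ updated from these right messages, then all right messages updated from the new left messages — the updated right messages again satisfy ρ_{c→v}(L∗) = ρ_{c→v}(L̄∗) = ρ_{c→v}(∗∗) for every pair (v-c). -/

import Mathlib

/-!
The right update for `L̄∗` differs from the ones for `L∗` and `∗∗` (which are literally the same
expression) only by a sum whose terms carry the factor `λ(LL) - λ(L∗) - λ(∗∗)`. When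
`ρ(L∗) = ρ(L̄∗) = ρ(∗∗)`, the left update makes this factor vanish: in `λ(L∗)` the subtracted part
is `γ` times the product of the common values over `C_c^u(v)` and `C_c^s(v)`, and since these two
sets partition `C(v) ∖ {c}`, that is exactly `λ(∗∗)` (`bpLeft_LL_eq`).
-/

open Finset

variable {V C : Type} [Fintype V] [DecidableEq V] [Fintype C] [DecidableEq C]

/-- The four state configurations supporting the k-SAT BP messages:
`LL = (L,L)`, `nLs = (L̄,∗)`, `Ls = (L,∗)`, `ss = (∗,∗)` (interpreted with respect to
each message's own edge label). -/
inductive BPConf : Type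
  | LL | nLs | Ls | ss
deriving DecidableEq

/-- `C(v)`. -/
def Cv (Vc : C → Finset V) (v : V) : Finset C := univ.filter fun c => v ∈ Vc c

/-- `C_c^s(v)`. -/
def Cs (Vc : C → Finset V) (L : V → C → Bool) (v : V) (c : C) : Finset C :=
  ((Cv Vc v).erase c).filter fun b => L v b = L v c

/-- `C_c^u(v)`. -/
def Cu (Vc : C → Finset V) (L : V → C → Bool) (v : V) (c : C) : Finset C :=
  ((Cv Vc v).erase c).filter fun b => L v b ≠ L v c

/-- The BP left-message update for k-SAT on the normally realized MRF. -/
def bpLeft (γ : ℝ) (Vc : C → Finset V) (L : V → C → Bool)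
    (ρ : C → V → BPConf → ℝ) : V → C → BPConf → ℝ := fun v c x =>
  match x with
  | .LL => (∏ b ∈ Cu Vc L v c, ρ b v .nLs) * ∏ b ∈ Cs Vc L v c, (ρ b v .LL + ρ b v .Ls)
  | .nLs => (∏ b ∈ Cs Vc L v c, ρ b v .nLs) *
      ((∏ b ∈ Cu Vc L v c, (ρ b v .Ls + ρ b v .LL)) - γ * ∏ b ∈ Cu Vc L v c, ρ b v .Ls)
  | .Ls => (∏ b ∈ Cu Vc L v c, ρ b v .nLs) *
      ((∏ b ∈ Cs Vc L v c, (ρ b v .Ls + ρ b v .LL)) - γ * ∏ b ∈ Cs Vc L v c, ρ b v .Ls)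
  | .ss => γ * ∏ b ∈ (Cv Vc v).erase c, ρ b v .ss

/-- The BP right-message update for k-SAT on the normally realized MRF. -/
def bpRight (Vc : C → Finset V) (lam : V → C → BPConf → ℝ) :
    C → V → BPConf → ℝ := fun c v x =>
  match x with
  | .LL => ∏ u ∈ (Vc c).erase v, lam u c .nLs
  | .nLs =>
      (∏ u ∈ (Vc c).erase v, (lam u c .Ls + lam u c .ss + lam u c .nLs)) +
        (∑ u ∈ (Vc c).erase v, (lam u c .LL - lam u c .Ls - lam u c .ss) *
          ∏ w ∈ ((Vc c).erase v).erase u, lam w c .nLs) -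
        ∏ u ∈ (Vc c).erase v, lam u c .nLs
  | .Ls =>
      (∏ u ∈ (Vc c).erase v, (lam u c .Ls + lam u c .ss + lam u c .nLs)) -
        ∏ u ∈ (Vc c).erase v, lam u c .nLs
  | .ss =>
      (∏ u ∈ (Vc c).erase v, (lam u c .Ls + lam u c .ss + lam u c .nLs)) -
        ∏ u ∈ (Vc c).erase v, lam u c .nLs

/-- The left messages computed from right messages with `ρ(L∗) = ρ(L̄∗) = ρ(∗∗)` satisfy
`λ(LL) = λ(L∗) + λ(∗∗)`. -/
lemma bpLeft_LL_eq (γ : ℝ) (Vc : C → Finset V) (L : V → C → Bool)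
    (ρ : C → V → BPConf → ℝ)
    (hsd : ∀ v : V, ∀ c ∈ Cv Vc v, ρ c v .Ls = ρ c v .nLs ∧ ρ c v .nLs = ρ c v .ss)
    (v : V) (c : C) :
    bpLeft γ Vc L ρ v c .LL = bpLeft γ Vc L ρ v c .Ls + bpLeft γ Vc L ρ v c .ss := by
  have hu : ∏ b ∈ Cu Vc L v c, ρ b v .nLs = ∏ b ∈ Cu Vc L v c, ρ b v .ss :=
    prod_congr rfl fun b hb => (hsd v b (mem_of_mem_erase (mem_filter.1 hb).1)).2
  have hs : ∏ b ∈ Cs Vc L v c, ρ b v .Ls = ∏ b ∈ Cs Vc L v c, ρ b v .ss :=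
    prod_congr rfl fun b hb =>
      have h := hsd v b (mem_of_mem_erase (mem_filter.1 hb).1)
      h.1.trans h.2
  have hsplit : (∏ b ∈ Cs Vc L v c, ρ b v .ss) * ∏ b ∈ Cu Vc L v c, ρ b v .ss =
      ∏ b ∈ (Cv Vc v).erase c, ρ b v .ss :=
    prod_filter_mul_prod_filter_not _ _ _
  simp only [bpLeft, hu, hs, ← hsplit, add_comm (ρ _ v .LL)]
  ring

/-- For a k-SAT instance and `γ ∈ ℝ`, if the BP right messages
satisfy `ρ_{c→v}(L∗) = ρ_{c→v}(L̄∗) = ρ_{c→v}(∗∗)` for every pair `(v-c)`, then after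
one BP iteration (all left messages updated from these right messages, then all right
messages updated from the new left messages) the updated right messages again satisfy
this condition for every pair `(v-c)`. -/
theorem stmt11 (γ : ℝ) (k : ℕ) (Vc : C → Finset V) (L : V → C → Bool)
    (hk2 : 2 ≤ k) (hk : ∀ c : C, (Vc c).card = k)
    (hCv : ∀ v : V, 2 ≤ (Cv Vc v).card)
    (ρ : C → V → BPConf → ℝ)
    (hsd : ∀ v : V, ∀ c ∈ Cv Vc v, ρ c v .Ls = ρ c v .nLs ∧ ρ c v .nLs = ρ c v .ss) :
    ∀ v : V, ∀ c ∈ Cv Vc v,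
      bpRight Vc (bpLeft γ Vc L ρ) c v .Ls = bpRight Vc (bpLeft γ Vc L ρ) c v .nLs ∧
      bpRight Vc (bpLeft γ Vc L ρ) c v .nLs = bpRight Vc (bpLeft γ Vc L ρ) c v .ss := by
  intro v c _
  have hsum : ∑ u ∈ (Vc c).erase v,
      (bpLeft γ Vc L ρ u c .LL - bpLeft γ Vc L ρ u c .Ls - bpLeft γ Vc L ρ u c .ss) *
        ∏ w ∈ ((Vc c).erase v).erase u, bpLeft γ Vc L ρ w c .nLs = 0 :=
    sum_eq_zero fun u _ => by
      rw [bpLeft_LL_eq γ Vc L ρ hsd u c]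
      ring
  simp only [bpRight, hsum, add_zero, and_self]
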